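/- arXiv:1302.1678 — 2 statements merged into one kernel-verified Lean document; each statement's English description precedes it below -/
import Mathlib

section
/- (Energy conservation at the continuous level, eqs. (7)–(8) of the paper.) Let m ≥ 1, d = 2m, let J ∈ ℝ^{d×d} be skew-symmetric, let H : ℝ^d → ℝ be C¹, let h > 0, s ≥ 1, and let η₀, …, η_{s−1} ∈ ℝ be arbitrary. Suppose σ : [0, h] → ℝ^d is a C¹ curve satisfying σ'(ch) = Σ_{j=0}^{s−1} P_j(c) γ_j for all c ∈ [0,1], where γ_j = η_j · J ∫₀¹ P_j(τ) ∇H(σ(τh)) dτ for j = 0, …, s−1. Then H(σ(h)) = H(σ(0)). -/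
open MeasureTheory Polynomial Matrix

/-- The shifted Legendre polynomial `P j`, orthonormal on `[0,1]`. -/
noncomputable def legP (j : ℕ) : ℝ → ℝ := fun x =>
  (Real.sqrt (2 * j + 1) / (Nat.factorial j)) *
    (Polynomial.derivative^[j] ((Polynomial.X ^ 2 - Polynomial.X) ^ j)).eval x

/-!
By the chain rule and the fundamental theorem of calculus, the change of energy along the curve is
the integral of `⟪∇H(σ), σ'⟫`. Since `σ'` is a combination of fixed vectors `γ_j` with scalar
weights `P_j`, this integral equals `h ∑ⱼ ⟪∫ P_j ∇H(σ), γ_j⟫`: only the `j`-th weighted mean of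
the gradient meets `γ_j`. As `γ_j` is a multiple of `J` applied to that very mean, skew-symmetry
makes every term vanish.
-/

open scoped Gradient RealInnerProductSpace

theorem continuous_legP (j : ℕ) : Continuous (legP j) :=
  continuous_const.mul (Polynomial.continuous _)

theorem inner_toEuclideanLin_self_of_transpose_eq_neg {n : Type*} [Fintype n] [DecidableEq n]
    {J : Matrix n n ℝ} (hJ : Jᵀ = -J) (v : EuclideanSpace ℝ n) :
    ⟪v, Matrix.toEuclideanLin J v⟫ = 0 := by
  have adjoint_eq_neg : (Matrix.toEuclideanLin J).adjoint = -Matrix.toEuclideanLin J := by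
    rw [← Matrix.toEuclideanLin_conjTranspose_eq_adjoint, conjTranspose_eq_transpose_of_trivial,
      hJ, map_neg]
  refine self_eq_neg.mp ?_
  calc ⟪v, Matrix.toEuclideanLin J v⟫
      = ⟪(Matrix.toEuclideanLin J).adjoint v, v⟫ := (LinearMap.adjoint_inner_left _ _ _).symm
    _ = -⟪v, Matrix.toEuclideanLin J v⟫ := by
      rw [adjoint_eq_neg, LinearMap.neg_apply, inner_neg_left, real_inner_comm]

theorem continuous_gradient_of_contDiff {𝕜 F : Type*} [RCLike 𝕜] [NormedAddCommGroup F]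
    [InnerProductSpace 𝕜 F] [CompleteSpace F] {f : F → 𝕜} (hf : ContDiff 𝕜 1 f) :
    Continuous (∇ f) :=
  (LinearIsometryEquiv.continuous _).comp (hf.continuous_fderiv one_ne_zero)

section InnerProductSpace

variable {E : Type*} [NormedAddCommGroup E] [InnerProductSpace ℝ E] {ι : Type*}

theorem inner_sum_smul_eq_sum_inner_smul (S : Finset ι) (p : ι → ℝ) (γ : ι → E) (x : E) :
    ⟪x, ∑ j ∈ S, p j • γ j⟫ = ∑ j ∈ S, ⟪p j • x, γ j⟫ := by
  simp only [inner_sum, real_inner_smul_left, real_inner_smul_right]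

section IntervalIntegral

variable {μ : Measure ℝ} {a b : ℝ}

theorem intervalIntegrable_inner_const {f : ℝ → E} (hf : IntervalIntegrable f μ a b) (x : E) :
    IntervalIntegrable (fun t ↦ ⟪f t, x⟫) μ a b :=
  ⟨Integrable.inner_const hf.1 x, Integrable.inner_const hf.2 x⟩

theorem intervalIntegral_inner_const [CompleteSpace E] {f : ℝ → E}
    (hf : IntervalIntegrable f μ a b) (x : E) :
    ∫ t in a..b, ⟪f t, x⟫ ∂μ = ⟪∫ t in a..b, f t ∂μ, x⟫ := by
  simpa only [innerSL_apply_apply, real_inner_comm] using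
    (innerSL ℝ x).intervalIntegral_comp_comm hf

variable {S : Finset ι} {P : ι → ℝ → ℝ} {g : ℝ → E}

theorem intervalIntegrable_inner_sum_smul
    (hPg : ∀ j ∈ S, IntervalIntegrable (fun t ↦ P j t • g t) μ a b) (γ : ι → E) :
    IntervalIntegrable (fun t ↦ ⟪g t, ∑ j ∈ S, P j t • γ j⟫) μ a b := by
  simpa only [inner_sum_smul_eq_sum_inner_smul, Finset.sum_fn] using
    IntervalIntegrable.sum S fun j hj ↦ intervalIntegrable_inner_const (hPg j hj) (γ j)

theorem intervalIntegral_inner_sum_smul [CompleteSpace E]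
    (hPg : ∀ j ∈ S, IntervalIntegrable (fun t ↦ P j t • g t) μ a b) (γ : ι → E) :
    ∫ t in a..b, ⟪g t, ∑ j ∈ S, P j t • γ j⟫ ∂μ =
      ∑ j ∈ S, ⟪∫ t in a..b, P j t • g t ∂μ, γ j⟫ := by
  simp only [inner_sum_smul_eq_sum_inner_smul]
  rw [intervalIntegral.integral_finsetSum fun j hj ↦
    intervalIntegrable_inner_const (hPg j hj) (γ j)]
  exact Finset.sum_congr rfl fun j hj ↦ intervalIntegral_inner_const (hPg j hj) (γ j)

end IntervalIntegral

variable [CompleteSpace E] {H : E → ℝ}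

theorem integral_inner_gradient_eq_sub {u u' : ℝ → E} {a b : ℝ}
    (hH : ∀ t ∈ Set.uIcc a b, DifferentiableAt ℝ H (u t))
    (hu : ∀ t ∈ Set.uIcc a b, HasDerivAt u (u' t) t)
    (hint : IntervalIntegrable (fun t ↦ ⟪∇ H (u t), u' t⟫) volume a b) :
    ∫ t in a..b, ⟪∇ H (u t), u' t⟫ = H (u b) - H (u a) :=
  intervalIntegral.integral_eq_sub_of_hasDerivAt (f := H ∘ u)
    (fun t ht ↦ (hH t ht).hasGradientAt.hasFDerivAt.comp_hasDerivAt t (hu t ht)) hint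

theorem sub_eq_sum_inner_integral_gradient {S : Finset ι} {P : ι → ℝ → ℝ} {u : ℝ → E}
    {γ : ι → E} {a b : ℝ} (hP : ∀ j ∈ S, IntervalIntegrable (P j) volume a b)
    (hH : ContDiff ℝ 1 H)
    (hu : ∀ t ∈ Set.uIcc a b, HasDerivAt u (∑ j ∈ S, P j t • γ j) t) :
    H (u b) - H (u a) = ∑ j ∈ S, ⟪∫ t in a..b, P j t • ∇ H (u t), γ j⟫ := by
  have gradient_continuousOn : ContinuousOn (fun t ↦ ∇ H (u t)) (Set.uIcc a b) :=
    (continuous_gradient_of_contDiff hH).comp_continuousOn (HasDerivAt.continuousOn hu)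
  have weighted_integrable : ∀ j ∈ S,
      IntervalIntegrable (fun t ↦ P j t • ∇ H (u t)) volume a b :=
    fun j hj ↦ (hP j hj).smul_continuousOn gradient_continuousOn
  calc H (u b) - H (u a)
      = ∫ t in a..b, ⟪∇ H (u t), ∑ j ∈ S, P j t • γ j⟫ :=
        (integral_inner_gradient_eq_sub (fun t _ ↦ hH.differentiable one_ne_zero (u t)) hu
          (intervalIntegrable_inner_sum_smul weighted_integrable γ)).symm
    _ = ∑ j ∈ S, ⟪∫ t in a..b, P j t • ∇ H (u t), γ j⟫ :=
        intervalIntegral_inner_sum_smul weighted_integrable γ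

theorem stmt7_general {S : Finset ι} {P : ι → ℝ → ℝ} {σ : ℝ → E} {γ : ι → E} {h : ℝ}
    (hP : ∀ j ∈ S, IntervalIntegrable (P j) volume 0 1) (hH : ContDiff ℝ 1 H)
    (hγ : ∀ j ∈ S, ⟪∫ τ in (0 : ℝ)..1, P j τ • ∇ H (σ (τ * h)), γ j⟫ = 0)
    (hσ : ∀ c ∈ Set.Icc (0 : ℝ) 1, HasDerivAt σ (∑ j ∈ S, P j c • γ j) (c * h)) :
    H (σ h) = H (σ 0) := by
  have rescaled_hasDerivAt : ∀ c ∈ Set.uIcc (0 : ℝ) 1,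
      HasDerivAt (fun c ↦ σ (c * h)) (∑ j ∈ S, P j c • h • γ j) c := by
    intro c hc
    rw [Set.uIcc_of_le zero_le_one] at hc
    simpa only [Finset.smul_sum, smul_comm h, Function.comp_def] using
      (hσ c hc).scomp c (hasDerivAt_mul_const h)
  refine sub_eq_zero.mp ?_
  calc H (σ h) - H (σ 0)
      = ∑ j ∈ S, ⟪∫ τ in (0 : ℝ)..1, P j τ • ∇ H (σ (τ * h)), h • γ j⟫ := by
        simpa only [one_mul, zero_mul] using
          sub_eq_sum_inner_integral_gradient hP hH rescaled_hasDerivAt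
    _ = 0 := Finset.sum_eq_zero fun j hj ↦ by rw [real_inner_smul_right, hγ j hj, mul_zero]

end InnerProductSpace

/-- energy conservation at the continuous level, eqs. (7)–(8).  If `J` is
skew-symmetric, `H` is `C¹`, and `σ : [0,h] → ℝ^d` satisfies
`σ'(ch) = ∑_{j<s} P_j(c) γ_j` with `γ_j = η_j J ∫₀¹ P_j(τ) ∇H(σ(τh)) dτ`, then
`H(σ(h)) = H(σ(0))`, for any choice of the constants `η_j`. -/
theorem stmt7 (m : ℕ) (hm : 1 ≤ m)
    (J : Matrix (Fin (2 * m)) (Fin (2 * m)) ℝ) (hJ : Jᵀ = -J)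
    (H : EuclideanSpace ℝ (Fin (2 * m)) → ℝ) (hH : ContDiff ℝ 1 H)
    (h : ℝ) (hh : 0 < h) (s : ℕ) (hs : 1 ≤ s)
    (η : ℕ → ℝ)
    (σ : ℝ → EuclideanSpace ℝ (Fin (2 * m)))
    (hσ' : ∀ c ∈ Set.Icc (0:ℝ) 1,
      HasDerivAt σ
        (∑ j ∈ Finset.range s, legP j c •
          (η j • Matrix.toEuclideanLin J
            (∫ τ in (0:ℝ)..1, legP j τ • gradient H (σ (τ * h)))))
        (c * h)) :
    H (σ h) = H (σ 0) :=
  stmt7_general (fun j _ ↦ (continuous_legP j).intervalIntegrable 0 1) hH (fun j _ ↦ by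
    rw [real_inner_smul_right, inner_toEuclideanLin_self_of_transpose_eq_neg hJ, mul_zero]) hσ'
end

section
/- (Quadrature error estimate, eqs. (24)–(25) of the paper.) Let k ≥ 1 and let c₁, …, c_k ∈ [0,1] and b₁, …, b_k ∈ ℝ be nodes and weights of a quadrature formula that is exact for all polynomials of degree ≤ 2k−1, i.e., Σ_{ℓ=1}^k b_ℓ q(c_ℓ) = ∫₀¹ q(x) dx for all q ∈ Π_{2k−1}. Let 0 ≤ j ≤ 2k−1, let E be a real normed vector space, and let ψ : ℝ → E be C^∞. Then Σ_{ℓ=1}^k b_ℓ P_j(c_ℓ) ψ(c_ℓ h) − ∫₀¹ P_j(τ) ψ(τh) dτ is O(h^{2k−j}) as h → 0⁺. Moreover, if ψ is a polynomial map with deg(P_j · ψ) ≤ 2k−1, this difference is exactly 0 for every h. -/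
open MeasureTheory Polynomial

/-!
The quadrature error is a linear functional, bounded by the supremum norm on `[0,1]`, and it
vanishes on vector-valued polynomials of degree `< D` as soon as it does on scalar ones. Replacing
`ψ` by its Taylor polynomial of degree `D - j - 1` at `0` therefore does not change the error of
`τ ↦ p τ • ψ (τ h)` when `deg p ≤ j`, while the Taylor remainder is `O(h ^ (D - j))`, uniformly in
`τ ∈ [0,1]`.
-/

/-- The shifted Legendre polynomial as an element of `ℝ[X]`, so that its degree can be used; `legP`
is its evaluation. -/
noncomputable def legPoly (j : ℕ) : ℝ[X] :=
  C (Real.sqrt (2 * j + 1) / (Nat.factorial j)) * derivative^[j] ((X ^ 2 - X) ^ j)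

theorem legP_eq_eval (j : ℕ) (x : ℝ) : legP j x = (legPoly j).eval x := by
  simp only [legP, legPoly, eval_mul, eval_C]

theorem natDegree_legPoly_le (j : ℕ) : (legPoly j).natDegree ≤ j := by
  have hbase : ((X ^ 2 - X : ℝ[X]) ^ j).natDegree ≤ j * 2 :=
    natDegree_pow_le_of_le j (by compute_degree)
  calc (legPoly j).natDegree
      ≤ (derivative^[j] ((X ^ 2 - X : ℝ[X]) ^ j)).natDegree := natDegree_C_mul_le _ _
    _ ≤ ((X ^ 2 - X : ℝ[X]) ^ j).natDegree - j := natDegree_iterate_derivative _ _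
    _ ≤ j := by omega

theorem exists_norm_sub_sum_pow_smul_le {E : Type*} [NormedAddCommGroup E] [NormedSpace ℝ E]
    {f : ℝ → E} {u v : ℝ} {n : ℕ} (huv : u ≤ v) (hf : ContDiffOn ℝ (n + 1) f (Set.Icc u v)) :
    ∃ a : Fin (n + 1) → E, ∃ K, 0 ≤ K ∧ ∀ t ∈ Set.Icc u v,
      ‖f t - ∑ i : Fin (n + 1), (t - u) ^ (i : ℕ) • a i‖ ≤ K * (t - u) ^ (n + 1) := by
  obtain ⟨K, hK⟩ := exists_taylor_mean_remainder_bound huv hf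
  refine ⟨fun i => ((i : ℕ).factorial : ℝ)⁻¹ • iteratedDerivWithin i f (Set.Icc u v) u,
    |K|, abs_nonneg K, fun t ht => ?_⟩
  have hpow : 0 ≤ (t - u) ^ (n + 1) := pow_nonneg (sub_nonneg.2 ht.1) _
  have htaylor : taylorWithinEval f n (Set.Icc u v) u t = ∑ i : Fin (n + 1),
      (t - u) ^ (i : ℕ) • ((i : ℕ).factorial : ℝ)⁻¹ • iteratedDerivWithin i f (Set.Icc u v) u := by
    simp only [taylor_within_apply, Finset.sum_range, smul_smul, mul_comm]
  rw [← htaylor]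
  exact (hK t ht).trans (mul_le_mul_of_nonneg_right (le_abs_self K) hpow)

section Quadrature

variable {ι E : Type*} [Fintype ι] [NormedAddCommGroup E] [NormedSpace ℝ E]
  {μ : Measure ℝ} {b c : ι → ℝ}

/-- The error on `f` of the quadrature formula with weights `b` and nodes `c` for integration
against `μ` over `[0,1]`. Interval integrals are taken over `(0,1]`, so an atom of `μ` at `0` does
not count. -/
noncomputable def quadratureError (μ : Measure ℝ) (b c : ι → ℝ) (f : ℝ → E) : E :=
  ∑ ℓ, b ℓ • f (c ℓ) - ∫ x in (0 : ℝ)..1, f x ∂μ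

/-- Exactness of a quadrature formula on the real polynomials of degree less than `D`. The strict
bound avoids the truncated subtraction `D - 1`. -/
def IsExactQuadrature (μ : Measure ℝ) (b c : ι → ℝ) (D : ℕ) : Prop :=
  ∀ q : ℝ[X], q.natDegree < D → quadratureError μ b c (fun x => q.eval x) = 0

theorem quadratureError_sub {f g : ℝ → E} (hf : IntervalIntegrable f μ 0 1)
    (hg : IntervalIntegrable g μ 0 1) :
    quadratureError μ b c (fun x => f x - g x) =
      quadratureError μ b c f - quadratureError μ b c g := by
  simp only [quadratureError, smul_sub, Finset.sum_sub_distrib,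
    intervalIntegral.integral_sub hf hg]
  abel

theorem quadratureError_sum {κ : Type*} {s : Finset κ} {f : κ → ℝ → E}
    (hf : ∀ i ∈ s, IntervalIntegrable (f i) μ 0 1) :
    quadratureError μ b c (fun x => ∑ i ∈ s, f i x) = ∑ i ∈ s, quadratureError μ b c (f i) := by
  simp only [quadratureError, Finset.smul_sum, Finset.sum_sub_distrib,
    intervalIntegral.integral_finsetSum hf]
  rw [Finset.sum_comm]

theorem quadratureError_smul_const [CompleteSpace E] (f : ℝ → ℝ) (v : E) :
    quadratureError μ b c (fun x => f x • v) = quadratureError μ b c f • v := by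
  simp only [quadratureError, intervalIntegral.integral_smul_const, sub_smul, Finset.sum_smul,
    smul_assoc]

theorem norm_quadratureError_le [IsLocallyFiniteMeasure μ] (hc : ∀ ℓ, c ℓ ∈ Set.Icc (0 : ℝ) 1)
    {f : ℝ → E} {M : ℝ} (hf : ∀ x ∈ Set.Icc (0 : ℝ) 1, ‖f x‖ ≤ M) :
    ‖quadratureError μ b c f‖ ≤ (∑ ℓ, |b ℓ| + μ.real (Set.Ioc 0 1)) * M := by
  have hsum : ‖∑ ℓ, b ℓ • f (c ℓ)‖ ≤ (∑ ℓ, |b ℓ|) * M := by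
    rw [Finset.sum_mul]
    refine norm_sum_le_of_le _ fun ℓ _ => ?_
    rw [norm_smul, Real.norm_eq_abs]
    exact mul_le_mul_of_nonneg_left (hf _ (hc ℓ)) (abs_nonneg _)
  have hint : ‖∫ x in (0 : ℝ)..1, f x ∂μ‖ ≤ μ.real (Set.Ioc 0 1) * M := by
    rw [intervalIntegral.integral_of_le zero_le_one, mul_comm]
    exact norm_setIntegral_le_of_norm_le_const measure_Ioc_lt_top
      fun x hx => hf x (Set.Ioc_subset_Icc_self hx)
  rw [add_mul]
  exact norm_sub_le_of_le hsum hint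

theorem norm_quadratureError_smul_comp_mul_le [IsLocallyFiniteMeasure μ]
    (hc : ∀ ℓ, c ℓ ∈ Set.Icc (0 : ℝ) 1) {w : ℝ → ℝ} {M : ℝ}
    (hw : ∀ x ∈ Set.Icc (0 : ℝ) 1, |w x| ≤ M) {r : ℝ → E} {δ K : ℝ} {N : ℕ} (hK : 0 ≤ K)
    (hr : ∀ t ∈ Set.Icc 0 δ, ‖r t‖ ≤ K * t ^ N) {h : ℝ} (hh : h ∈ Set.Icc 0 δ) :
    ‖quadratureError μ b c (fun τ => w τ • r (τ * h))‖ ≤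
      (∑ ℓ, |b ℓ| + μ.real (Set.Ioc 0 1)) * (M * K) * h ^ N := by
  rw [mul_assoc, mul_assoc]
  refine norm_quadratureError_le hc fun τ hτ => ?_
  have hτh : 0 ≤ τ * h := mul_nonneg hτ.1 hh.1
  have hτh_le : τ * h ≤ h := mul_le_of_le_one_left hh.1 hτ.2
  have hr_le : ‖r (τ * h)‖ ≤ K * h ^ N :=
    (hr _ ⟨hτh, hτh_le.trans hh.2⟩).trans (by gcongr)
  have hM : 0 ≤ M := (abs_nonneg _).trans (hw τ hτ)
  rw [norm_smul, Real.norm_eq_abs]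
  exact mul_le_mul (hw τ hτ) hr_le (norm_nonneg _) hM

variable [CompleteSpace E] [IsLocallyFiniteMeasure μ] {D n : ℕ} {p : ℝ[X]}

theorem IsExactQuadrature.quadratureError_eval_smul_sum_pow_smul
    (hexact : IsExactQuadrature μ b c D) (hpn : p.natDegree + n < D) (a : Fin (n + 1) → E)
    (h : ℝ) :
    quadratureError μ b c (fun τ => p.eval τ • ∑ i : Fin (n + 1), (τ * h) ^ (i : ℕ) • a i) = 0 := by
  have hterm (i : Fin (n + 1)) :
      quadratureError μ b c (fun τ => (p * (X * C h) ^ (i : ℕ)).eval τ • a i) = 0 := by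
    have hpow : ((X * C h) ^ (i : ℕ)).natDegree ≤ (i : ℕ) * 1 :=
      natDegree_pow_le_of_le _ (by compute_degree)
    have hdeg : (p * (X * C h) ^ (i : ℕ)).natDegree < D :=
      natDegree_mul_le.trans_lt (by omega)
    rw [quadratureError_smul_const, hexact _ hdeg, zero_smul]
  have hexpand (τ : ℝ) : p.eval τ • ∑ i : Fin (n + 1), (τ * h) ^ (i : ℕ) • a i =
      ∑ i, (p * (X * C h) ^ (i : ℕ)).eval τ • a i := by
    simp only [Finset.smul_sum, smul_smul, eval_mul, eval_pow, eval_X, eval_C]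
  simp only [hexpand]
  rw [quadratureError_sum fun i _ => Continuous.intervalIntegrable (by fun_prop) _ _]
  exact Finset.sum_eq_zero fun i _ => hterm i

theorem IsExactQuadrature.exists_norm_quadratureError_le (hexact : IsExactQuadrature μ b c D)
    (hc : ∀ ℓ, c ℓ ∈ Set.Icc (0 : ℝ) 1) (hpn : p.natDegree + n < D) {ψ : ℝ → E} {δ : ℝ}
    (hδ : 0 ≤ δ) (hψ : ContDiffOn ℝ (n + 1) ψ (Set.Icc 0 δ)) :
    ∃ K, ∀ h ∈ Set.Icc 0 δ,
      ‖quadratureError μ b c (fun τ => p.eval τ • ψ (τ * h))‖ ≤ K * h ^ (n + 1) := by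
  obtain ⟨a, K, hK, hremainder⟩ := exists_norm_sub_sum_pow_smul_le hδ hψ
  simp only [sub_zero] at hremainder
  obtain ⟨M, hM⟩ := (isCompact_Icc (a := (0 : ℝ)) (b := 1)).exists_bound_of_continuousOn
    p.continuous.continuousOn
  refine ⟨(∑ ℓ, |b ℓ| + μ.real (Set.Ioc 0 1)) * (M * K), fun h hh => ?_⟩
  have hmaps : Set.MapsTo (fun τ => τ * h) (Set.Icc 0 1) (Set.Icc 0 δ) := fun τ hτ =>
    ⟨mul_nonneg hτ.1 hh.1, (mul_le_of_le_one_left hh.1 hτ.2).trans hh.2⟩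
  have hψ_int : IntervalIntegrable (fun τ => p.eval τ • ψ (τ * h)) μ 0 1 := by
    refine ContinuousOn.intervalIntegrable_of_Icc zero_le_one ?_
    exact p.continuous.continuousOn.smul (hψ.continuousOn.comp (by fun_prop) hmaps)
  have htaylor_int :
      IntervalIntegrable (fun τ => p.eval τ • ∑ i : Fin (n + 1), (τ * h) ^ (i : ℕ) • a i) μ 0 1 :=
    Continuous.intervalIntegrable (by fun_prop) _ _
  have hsubtract : quadratureError μ b c (fun τ => p.eval τ • ψ (τ * h)) =
      quadratureError μ b c
        (fun τ => p.eval τ • (ψ (τ * h) - ∑ i : Fin (n + 1), (τ * h) ^ (i : ℕ) • a i)) := by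
    simp only [smul_sub]
    rw [quadratureError_sub hψ_int htaylor_int,
      hexact.quadratureError_eval_smul_sum_pow_smul hpn, sub_zero]
  rw [hsubtract]
  exact norm_quadratureError_smul_comp_mul_le hc hM hK hremainder hh

end Quadrature

theorem stmt9_general {ι E : Type*} [Fintype ι] [NormedAddCommGroup E] [NormedSpace ℝ E]
    [CompleteSpace E] {μ : Measure ℝ} [IsLocallyFiniteMeasure μ] {b c : ι → ℝ} {D : ℕ}
    (hc : ∀ ℓ, c ℓ ∈ Set.Icc (0 : ℝ) 1) (hexact : IsExactQuadrature μ b c D)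
    {p : ℝ[X]} {j : ℕ} (hpj : p.natDegree ≤ j) (hj : j < D)
    {ψ : ℝ → E} {δ : ℝ} (hδ : 0 < δ) (hψ : ContDiffOn ℝ (D - j : ℕ) ψ (Set.Icc 0 δ)) :
    (∃ K > (0 : ℝ), ∃ h₀ > (0 : ℝ), ∀ h : ℝ, 0 < h → h ≤ h₀ →
      ‖quadratureError μ b c (fun τ => p.eval τ • ψ (τ * h))‖ ≤ K * h ^ (D - j)) ∧
    (∀ (n : ℕ) (a : Fin (n + 1) → E),
      (∀ t : ℝ, ψ t = ∑ i : Fin (n + 1), t ^ (i : ℕ) • a i) → j + n < D →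
      ∀ h : ℝ, quadratureError μ b c (fun τ => p.eval τ • ψ (τ * h)) = 0) := by
  constructor
  · obtain ⟨n, hn⟩ : ∃ n, D - j = n + 1 := ⟨D - j - 1, by omega⟩
    rw [hn] at hψ ⊢
    obtain ⟨K, hK⟩ := hexact.exists_norm_quadratureError_le hc (p := p) (n := n) (by omega) hδ.le
      (by exact_mod_cast hψ)
    refine ⟨max K 1, by positivity, δ, hδ, fun h h_pos h_le => (hK h ⟨h_pos.le, h_le⟩).trans ?_⟩
    gcongr
    exact le_max_left K 1
  · intro n a hψa hjn h
    simp only [hψa]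
    exact hexact.quadratureError_eval_smul_sum_pow_smul (by omega) a h

/-- quadrature error estimate, eqs. (24)–(25).  For a quadrature on `[0,1]`
exact on `Π_{2k-1}`, `0 ≤ j ≤ 2k-1` and `ψ : ℝ → E` of class `C^∞`,
`∑_ℓ b_ℓ P_j(c_ℓ) ψ(c_ℓ h) - ∫₀¹ P_j(τ) ψ(τh) dτ` is `O(h^{2k-j})` as `h → 0⁺`; moreover it
vanishes identically when `ψ` is a polynomial map with `deg (P_j ψ) ≤ 2k-1`. -/
theorem stmt9 (k : ℕ) (hk : 1 ≤ k)
    (c b : Fin k → ℝ) (hc : ∀ ℓ, c ℓ ∈ Set.Icc (0:ℝ) 1)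
    (hquad : ∀ q : Polynomial ℝ, q.natDegree ≤ 2 * k - 1 →
      ∑ ℓ, b ℓ * q.eval (c ℓ) = ∫ x in (0:ℝ)..1, q.eval x)
    (j : ℕ) (hj : j ≤ 2 * k - 1)
    {E : Type*} [NormedAddCommGroup E] [NormedSpace ℝ E] [CompleteSpace E]
    (ψ : ℝ → E) (hψ : ContDiff ℝ (⊤ : ℕ∞) ψ) :
    (∃ C > (0:ℝ), ∃ h₀ > (0:ℝ), ∀ h : ℝ, 0 < h → h ≤ h₀ →
      ‖(∑ ℓ, (b ℓ * legP j (c ℓ)) • ψ (c ℓ * h)) -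
          ∫ τ in (0:ℝ)..1, legP j τ • ψ (τ * h)‖ ≤ C * h ^ (2 * k - j)) ∧
    (∀ (n : ℕ) (a : Fin (n + 1) → E),
      (∀ t : ℝ, ψ t = ∑ i : Fin (n + 1), t ^ (i : ℕ) • a i) →
      j + n ≤ 2 * k - 1 →
      ∀ h : ℝ, (∑ ℓ, (b ℓ * legP j (c ℓ)) • ψ (c ℓ * h)) =
        ∫ τ in (0:ℝ)..1, legP j τ • ψ (τ * h)) := by
  have hlt {i : ℕ} : i < 2 * k ↔ i ≤ 2 * k - 1 := by omega
  have hexact : IsExactQuadrature volume b c (2 * k) := fun q hq =>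
    sub_eq_zero.2 (hquad q (hlt.1 hq))
  simpa only [quadratureError, ← legP_eq_eval, smul_smul, sub_eq_zero, hlt] using
    stmt9_general hc hexact (natDegree_legPoly_le j) (hlt.2 hj) one_pos
      (contDiff_infty.1 hψ _).contDiffOn
end
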